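/- For all σ-structures A and B and every k ∈ ℕ, A and B satisfy the same sentences of ∃FO_k if, and only if, there exist pathwise embeddings F_k^I(A) → F_k^I(B) and F_k^I(B) → F_k^I(A) in EM(E_k^I). -/

import Mathlib

/-- A relational vocabulary: a type of relation symbols together with their arities. -/
structure Vocab : Type 1 where
  Rel : Type
  ar : Rel → ℕ

/-- A structure for the relational vocabulary `V` with carrier `α`. -/
structure Str (V : Vocab) (α : Type) : Type where
  rel : ∀ r : V.Rel, (Fin (V.ar r) → α) → Prop
/-- Existential first-order formulas over `V` with free variables among `Fin n`
(de Bruijn style): no universal quantifiers, and negations only on atomic formulas. -/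
inductive EFml (V : Vocab) : ℕ → Type
  | rel {n : ℕ} (r : V.Rel) (v : Fin (V.ar r) → Fin n) : EFml V n
  | nrel {n : ℕ} (r : V.Rel) (v : Fin (V.ar r) → Fin n) : EFml V n
  | eq {n : ℕ} (i j : Fin n) : EFml V n
  | ne {n : ℕ} (i j : Fin n) : EFml V n
  | and {n : ℕ} (φ ψ : EFml V n) : EFml V n
  | or {n : ℕ} (φ ψ : EFml V n) : EFml V n
  | ex {n : ℕ} (φ : EFml V (n + 1)) : EFml V n

namespace EFml

/-- Quantifier rank. -/
def qr {V : Vocab} : ∀ {n : ℕ}, EFml V n → ℕ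
  | _, .rel _ _ => 0
  | _, .nrel _ _ => 0
  | _, .eq _ _ => 0
  | _, .ne _ _ => 0
  | _, .and φ ψ => max (qr φ) (qr ψ)
  | _, .or φ ψ => max (qr φ) (qr ψ)
  | _, .ex φ => qr φ + 1

/-- Satisfaction in a structure, relative to an environment. -/
def Sat {V : Vocab} {α : Type} (M : Str V α) : ∀ {n : ℕ}, EFml V n → (Fin n → α) → Prop
  | _, .rel r v, e => M.rel r fun i => e (v i)
  | _, .nrel r v, e => ¬ M.rel r fun i => e (v i)
  | _, .eq i j, e => e i = e j
  | _, .ne i j, e => e i ≠ e j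
  | _, .and φ ψ, e => Sat M φ e ∧ Sat M ψ e
  | _, .or φ ψ, e => Sat M φ e ∨ Sat M ψ e
  | _, .ex φ, e => ∃ a : α, Sat M φ (Fin.snoc e a)

end EFml
/-- An object datum for the Eilenberg–Moore category `EM(E_k^I)` of the
Ehrenfeucht–Fraïssé comonad over `σ^I = σ ∪ {I}`: a `σ`-structure together with an
interpretation `ieq` of the fresh binary relation symbol `I` and a (forest) order. -/
structure EObj (V : Vocab) : Type 1 where
  carrier : Type
  rel : ∀ r : V.Rel, (Fin (V.ar r) → carrier) → Prop
  ieq : carrier → carrier → Prop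
  le : carrier → carrier → Prop

namespace EObj

variable {V : Vocab}

/-- Gaifman adjacency, with respect to all relations of `σ ∪ {I}`. -/
def Adj (X : EObj V) (x y : X.carrier) : Prop :=
  x ≠ y ∧ ((∃ r v, X.rel r v ∧ (∃ i, v i = x) ∧ (∃ j, v j = y)) ∨ X.ieq x y ∨ X.ieq y x)

/-- The covering relation of the order of `X`. -/
def Cover (X : EObj V) (x y : X.carrier) : Prop :=
  X.le x y ∧ x ≠ y ∧ ∀ z, X.le x z → X.le z y → z = x ∨ z = y

/-- Roots, i.e. minimal elements of the forest order. -/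
def IsRoot (X : EObj V) (x : X.carrier) : Prop := ∀ y, X.le y x → y = x

/-- `X` is (the datum of) a coalgebra for `E_k^I`: a forest-ordered `σ^I`-structure of
height at most `k` in which Gaifman-adjacent elements are comparable. -/
def IsCoalg (k : ℕ) (X : EObj V) : Prop :=
  (∀ x, X.le x x) ∧ (∀ x y z, X.le x y → X.le y z → X.le x z) ∧
  (∀ x y, X.le x y → X.le y x → x = y) ∧
  (∀ x : X.carrier, {y | X.le y x}.Finite ∧ {y | X.le y x}.ncard ≤ k + 1 ∧
    ∀ y z, X.le y x → X.le z x → X.le y z ∨ X.le z y) ∧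
  (∀ x y, X.Adj x y → X.le x y ∨ X.le y x)

/-- Morphisms of `EM(E_k^I)`: homomorphisms of `σ^I`-structures that are also forest
morphisms (they send roots to roots and preserve the covering relation). -/
def IsHom (X Y : EObj V) (f : X.carrier → Y.carrier) : Prop :=
  (∀ r v, X.rel r v → Y.rel r fun i => f (v i)) ∧
  (∀ x y, X.ieq x y → Y.ieq (f x) (f y)) ∧
  (∀ x, X.IsRoot x → Y.IsRoot (f x)) ∧
  (∀ x y, X.Cover x y → Y.Cover (f x) (f y))

/-- Embeddings: morphisms that are injective and reflect all relations. -/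
def IsEmb (X Y : EObj V) (f : X.carrier → Y.carrier) : Prop :=
  IsHom X Y f ∧ Function.Injective f ∧
  (∀ r v, (Y.rel r fun i => f (v i)) → X.rel r v) ∧
  (∀ x y, Y.ieq (f x) (f y) → X.ieq x y)

/-- Paths: objects whose forest order is finite and linear. -/
def IsPath (X : EObj V) : Prop :=
  Finite X.carrier ∧ ∀ x y : X.carrier, X.le x y ∨ X.le y x

/-- Pathwise embeddings: morphisms `f : X → Y` such that for every path embedding
`m : P ↪ X` the composite `f ∘ m` is a path embedding. -/
def IsPWEmb (k : ℕ) (X Y : EObj V) (f : X.carrier → Y.carrier) : Prop :=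
  IsHom X Y f ∧ ∀ P : EObj V, IsCoalg k P → IsPath P →
    ∀ m : P.carrier → X.carrier, IsEmb P X m → IsEmb P Y fun p => f (m p)

/-- Open morphisms: every commutative square of path embeddings over `f` admits a
diagonal filler. -/
def IsOpen (k : ℕ) (X Y : EObj V) (f : X.carrier → Y.carrier) : Prop :=
  ∀ P Q : EObj V, IsCoalg k P → IsPath P → IsCoalg k Q → IsPath Q →
    ∀ (i : P.carrier → Q.carrier) (m : P.carrier → X.carrier)
      (n : Q.carrier → Y.carrier),
      IsEmb P Q i → IsEmb P X m → IsEmb Q Y n → (∀ x, n (i x) = f (m x)) →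
      ∃ d : Q.carrier → X.carrier, IsHom Q X d ∧ (∀ x, d (i x) = m x) ∧ ∀ q, f (d q) = n q

end EObj
/-- The co-free coalgebra `F_k^I(A) = (E_k J(A), ⊑)` on `J(A)`: non-empty sequences of
elements of `A` of length at most `k`, ordered by the prefix order.  A tuple of sequences
is related iff the sequences are pairwise comparable and their last elements are related
in `J(A)`; the fresh relation `I` is interpreted as comparability plus equality of last
elements (the diagonal of `J`). -/
def FE (V : Vocab) (k : ℕ) {α : Type} (A : Str V α) : EObj V where
  carrier := {l : List α // l ≠ [] ∧ l.length ≤ k}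
  rel r v :=
    (∀ i j, (v i).1 <+: (v j).1 ∨ (v j).1 <+: (v i).1) ∧
    A.rel r fun i => (v i).1.getLast (v i).2.1
  ieq s t := ((s.1 <+: t.1) ∨ (t.1 <+: s.1)) ∧ s.1.getLast s.2.1 = t.1.getLast t.2.1
  le s t := s.1 <+: t.1
section helpers

variable {V : Vocab} {α β : Type}

def PIso (A : Str V α) (B : Str V β) (p : Set (α × β)) : Prop :=
  (∀ x ∈ p, ∀ y ∈ p, (x.1 = y.1 ↔ x.2 = y.2)) ∧
  ∀ r (v : Fin (V.ar r) → α × β), (∀ i, v i ∈ p) →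
    (A.rel r (fun i => (v i).1) ↔ B.rel r fun i => (v i).2)

theorem PIso.mono {A : Str V α} {B : Str V β} {p q : Set (α × β)} (h : PIso A B q)
    (hpq : p ⊆ q) : PIso A B p :=
  ⟨fun x hx y hy => h.1 x (hpq hx) y (hpq hy), fun r v hv => h.2 r v fun i => hpq (hv i)⟩

def Gm (A : Str V α) (B : Str V β) : ℕ → Set (α × β) → Prop
  | 0, p => PIso A B p
  | m + 1, p => PIso A B p ∧ ∀ a, ∃ b, Gm A B m (insert (a, b) p)

theorem Gm.piso {A : Str V α} {B : Str V β} {m : ℕ} {p : Set (α × β)} (h : Gm A B m p) :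
    PIso A B p := by
  cases m with
  | zero => exact h
  | succ m => exact h.1

/-- conjunction of a list of formulas -/
def conjL {n : ℕ} : List (EFml V (n + 1)) → EFml V (n + 1)
  | [] => .eq 0 0
  | φ :: l => .and φ (conjL l)

theorem conjL_sat (A : Str V α) {n : ℕ} (l : List (EFml V (n + 1))) (e : Fin (n + 1) → α) :
    (conjL l).Sat A e ↔ ∀ φ ∈ l, φ.Sat A e := by
  induction l with
  | nil => simp [conjL, EFml.Sat]
  | cons φ l ih => simp [conjL, EFml.Sat, ih]

theorem conjL_qr {n m : ℕ} (l : List (EFml V (n + 1))) (h : ∀ φ ∈ l, φ.qr ≤ m) :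
    (conjL l).qr ≤ m := by
  induction l with
  | nil => simp [conjL, EFml.qr]
  | cons φ l ih =>
    simp only [conjL, EFml.qr]
    exact max_le (h _ (by simp)) (ih fun ψ hψ => h ψ (by simp [hψ]))

def lits (V : Vocab) (n : ℕ) : Set (EFml V n) :=
  (Set.range fun x : Σ r : V.Rel, (Fin (V.ar r) → Fin n) => EFml.rel x.1 x.2) ∪
  (Set.range fun x : Σ r : V.Rel, (Fin (V.ar r) → Fin n) => EFml.nrel x.1 x.2) ∪
  (Set.range fun x : Fin n × Fin n => EFml.eq x.1 x.2) ∪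
  (Set.range fun x : Fin n × Fin n => EFml.ne x.1 x.2)

theorem lits_finite [Finite V.Rel] (n : ℕ) : (lits V n).Finite :=
  (((Set.finite_range _).union (Set.finite_range _)).union (Set.finite_range _)).union
    (Set.finite_range _)

theorem lits_qr {n : ℕ} : ∀ φ ∈ lits V n, φ.qr = 0 := by
  rintro φ (((⟨x, rfl⟩ | ⟨x, rfl⟩) | ⟨x, rfl⟩) | ⟨x, rfl⟩) <;> rfl

theorem lits_piso (A : Str V α) (B : Str V β) {n : ℕ} (e : Fin n → α) (e' : Fin n → β)
    (h : ∀ φ ∈ lits V n, φ.Sat A e → φ.Sat B e') :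
    PIso A B (Set.range fun i => (e i, e' i)) := by
  constructor
  · rintro _ ⟨i, rfl⟩ _ ⟨j, rfl⟩
    refine ⟨fun hh => h (.eq i j) (Or.inl (Or.inr ⟨(i, j), rfl⟩)) hh, fun hh => ?_⟩
    by_contra hc
    exact h (.ne i j) (Or.inr ⟨(i, j), rfl⟩) hc hh
  · intro r v hv
    choose w hw using hv
    obtain rfl : (fun i => (e (w i), e' (w i))) = v := funext hw
    refine ⟨fun hh => h (.rel r w) (Or.inl (Or.inl (Or.inl ⟨⟨r, w⟩, rfl⟩))) hh, fun hh => ?_⟩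
    by_contra hc
    exact h (.nrel r w) (Or.inl (Or.inl (Or.inr ⟨⟨r, w⟩, rfl⟩))) hc hh

theorem range_pair_snoc {n : ℕ} (e : Fin n → α) (e' : Fin n → β) (a : α) (b : β) :
    (Set.range fun i : Fin (n + 1) =>
      ((Fin.snoc e a : Fin (n + 1) → α) i, (Fin.snoc e' b : Fin (n + 1) → β) i))
    = insert (a, b) (Set.range fun i => (e i, e' i)) := by
  ext x
  simp only [Set.mem_range, Set.mem_insert_iff, Fin.exists_fin_succ', Fin.snoc_castSucc,
    Fin.snoc_last]
  constructor
  · rintro (h | h)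
    · exact Or.inr h
    · exact Or.inl h.symm
  · rintro (h | h)
    · exact Or.inr h.symm
    · exact Or.inl h

theorem exists_fmls [Finite V.Rel] (A : Str V α) (B : Str V β) (m : ℕ) : ∀ n : ℕ,
    ∃ S : Set (EFml V n), S.Finite ∧ (∀ φ ∈ S, φ.qr ≤ m) ∧
      ∀ (e : Fin n → α) (e' : Fin n → β), (∀ φ ∈ S, φ.Sat A e → φ.Sat B e') →
        Gm A B m (Set.range fun i => (e i, e' i)) := by
  induction m with
  | zero =>
    intro n
    exact ⟨lits V n, lits_finite n, fun φ h => (lits_qr φ h).le, fun e e' h => lits_piso A B e e' h⟩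
  | succ m ih =>
    intro n
    classical
    obtain ⟨S, hS, hq, hG⟩ := ih (n + 1)
    refine ⟨lits V n ∪ (fun T : Finset (EFml V (n+1)) => EFml.ex (conjL T.toList)) ''
      (hS.toFinset.powerset : Set (Finset (EFml V (n + 1)))),
      (lits_finite n).union ((Finset.finite_toSet _).image _), ?_, ?_⟩
    · rintro φ (h | ⟨T, hT, rfl⟩)
      · rw [lits_qr φ h]; omega
      · simp only [EFml.qr]
        have hT' : T ⊆ hS.toFinset := by simpa using hT
        have := conjL_qr (m := m) T.toList (fun φ h => hq φ (by
          simpa using hT' (Finset.mem_toList.1 h)))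
        omega
    · intro e e' h
      refine ⟨lits_piso A B e e' fun φ hφ => h φ (Or.inl hφ), fun a => ?_⟩
      let T : Finset (EFml V (n + 1)) :=
        hS.toFinset.filter fun φ => φ.Sat A (Fin.snoc e a : Fin (n + 1) → α)
      have hT : (conjL T.toList).Sat A (Fin.snoc e a : Fin (n + 1) → α) := by
        rw [conjL_sat]
        intro φ hφ
        exact (Finset.mem_filter.1 (Finset.mem_toList.1 hφ)).2
      have hm : T ∈ (hS.toFinset.powerset : Set (Finset (EFml V (n + 1)))) :=
        Finset.mem_coe.2 (Finset.mem_powerset.2 (Finset.filter_subset _ _))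
      have hB : (EFml.ex (conjL T.toList)).Sat B e' :=
        h _ (Or.inr ⟨T, hm, rfl⟩) (show ∃ a, _ from ⟨a, hT⟩)
      obtain ⟨b, hb⟩ : ∃ b, (conjL T.toList).Sat B (Fin.snoc e' b : Fin (n + 1) → β) := hB
      rw [conjL_sat] at hb
      refine ⟨b, ?_⟩
      rw [← range_pair_snoc]
      exact hG _ _ fun φ hφ hs => hb φ (by simp [T, hφ, hs])

theorem Gm.strategy {A : Str V α} {B : Str V β} (m : ℕ) : ∀ p : Set (α × β), Gm A B m p →
    ∃ H : List α → List (α × β), (∀ l, l.length ≤ m → (H l).map Prod.fst = l) ∧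
      (∀ l l', l <+: l' → l'.length ≤ m → H l <+: H l') ∧
      ∀ l, l.length ≤ m → PIso A B (p ∪ {x | x ∈ H l}) := by
  induction m with
  | zero =>
    intro p h
    refine ⟨fun _ => [], ?_, ?_, ?_⟩
    · intro l hl
      simp at hl
      simp [hl]
    · intros; simp
    · intro l hl
      simpa using h.piso
  | succ m ih =>
    intro p h
    obtain ⟨hp, h⟩ := h
    choose b hb using h
    choose K hK using fun a => ih _ (hb a)
    refine ⟨fun l => match l with
      | [] => []
      | a :: l => (a, b a) :: K a l, ?_, ?_, ?_⟩
    · rintro (_ | ⟨a, l⟩) hl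
      · rfl
      · simp at hl
        simp [(hK a).1 l hl]
    · rintro (_ | ⟨a, l⟩) (_ | ⟨a', l'⟩) hp hl
      · simp
      · simp
      · simp at hp
      · simp only [List.cons_prefix_cons] at hp
        obtain ⟨rfl, hp⟩ := hp
        simp at hl
        simpa using (hK a).2.1 l l' hp hl
    · rintro (_ | ⟨a, l⟩) hl
      · simpa using hp
      · simp at hl
        refine ((hK a).2.2 l hl).mono ?_
        intro x hx
        simp only [Set.mem_union, Set.mem_setOf_eq, List.mem_cons, Set.mem_insert_iff] at hx ⊢
        tauto

def pset {k : ℕ} (A : Str V α) (B : Str V β)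
    (f : (FE V k A).carrier → (FE V k B).carrier) (l : List α) : Set (α × β) :=
  {x | ∃ t : (FE V k A).carrier, t.1 <+: l ∧
    x = (t.1.getLast t.2.1, (f t).1.getLast (f t).2.1)}

/-- direction from games to formulas -/
theorem sat_of_piso {k : ℕ} (A : Str V α) (B : Str V β)
    (f : (FE V k A).carrier → (FE V k B).carrier)
    (h : ∀ l, l.length ≤ k → PIso A B (pset A B f l)) {n : ℕ} (φ : EFml V n) :
    ∀ (l : List α) (e : Fin n → α) (e' : Fin n → β), l.length + φ.qr ≤ k →
      (∀ i, (e i, e' i) ∈ pset A B f l) → φ.Sat A e → φ.Sat B e' := by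
  induction φ with
  | rel r v =>
    intro l e e' hl he hs
    exact ((h l (by omega)).2 r (fun i => (e (v i), e' (v i))) (fun i => he _)).1 hs
  | nrel r v =>
    intro l e e' hl he hs hs'
    exact hs (((h l (by omega)).2 r (fun i => (e (v i), e' (v i))) (fun i => he _)).2 hs')
  | eq i j =>
    intro l e e' hl he hs
    exact ((h l (by omega)).1 _ (he i) _ (he j)).1 hs
  | ne i j =>
    intro l e e' hl he hs hs'
    exact hs (((h l (by omega)).1 _ (he i) _ (he j)).2 hs')
  | and φ ψ ih1 ih2 =>
    intro l e e' hl he hs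
    simp only [EFml.qr] at hl
    exact ⟨ih1 l e e' (by omega) he hs.1, ih2 l e e' (by omega) he hs.2⟩
  | or φ ψ ih1 ih2 =>
    intro l e e' hl he hs
    simp only [EFml.qr] at hl
    exact hs.imp (ih1 l e e' (by omega) he) (ih2 l e e' (by omega) he)
  | ex φ ih =>
    intro l e e' hl he hs
    simp only [EFml.qr] at hl
    obtain ⟨a, ha⟩ := hs
    let t : (FE V k A).carrier := ⟨l ++ [a], by simp, by simp; omega⟩
    refine ⟨(f t).1.getLast (f t).2.1, ih (l ++ [a]) _ _ (by simp; omega) ?_ ha⟩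
    intro i
    refine Fin.lastCases ?_ (fun i => ?_) i
    · simp only [Fin.snoc_last]
      exact ⟨t, List.prefix_rfl, by simp [t]⟩
    · simp only [Fin.snoc_castSucc]
      obtain ⟨s, hs, h⟩ := he i
      exact ⟨s, hs.trans (List.prefix_append _ _), h⟩

theorem hom_mono {k : ℕ} {P Y : EObj V} (hP : P.IsCoalg k) (hfin : Finite P.carrier)
    (hr : ∀ y, Y.le y y) (ht : ∀ x y z, Y.le x y → Y.le y z → Y.le x z)
    {f : P.carrier → Y.carrier} (hf : EObj.IsHom P Y f) {x y : P.carrier} (h : P.le x y) :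
    Y.le (f x) (f y) := by
  classical
  letI : PartialOrder P.carrier :=
    { le := P.le, le_refl := hP.1, le_trans := hP.2.1, le_antisymm := hP.2.2.1 }
  haveI := Fintype.ofFinite P.carrier
  letI : LocallyFiniteOrder P.carrier := Fintype.toLocallyFiniteOrder
  have h' : x ≤ y := h
  rw [le_iff_reflTransGen_covBy] at h'
  induction h' with
  | refl => exact hr _
  | tail hab hbc ih =>
    rename_i b c
    have hxb : x ≤ b := le_iff_reflTransGen_covBy.2 hab
    refine ht _ _ _ (ih hxb) (hf.2.2.2 b c ⟨hbc.1.le, hbc.1.ne, ?_⟩).1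
    intro z hz hz'
    have hz : b ≤ z := hz
    have hz' : z ≤ c := hz'
    rcases hz.eq_or_lt with e | e
    · exact Or.inl e.symm
    · rcases hz'.eq_or_lt with e' | e'
      · exact Or.inr e'
      · exact (hbc.2 e e').elim

/-- the path of prefixes of a list -/
def pathOf (k : ℕ) (A : Str V α) (l : List α) : EObj V where
  carrier := {t : (FE V k A).carrier // t.1 <+: l}
  rel r v := (FE V k A).rel r fun i => (v i).1
  ieq s t := (FE V k A).ieq s.1 t.1
  le s t := (FE V k A).le s.1 t.1

theorem prefix_cmp {l s t : List α} (hs : s <+: l) (ht : t <+: l) : s <+: t ∨ t <+: s := by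
  rcases le_total s.length t.length with h | h
  · exact Or.inl (List.prefix_of_prefix_length_le hs ht h)
  · exact Or.inr (List.prefix_of_prefix_length_le ht hs h)

theorem cmp_eq {s t : List α} (h : s <+: t ∨ t <+: s) (hl : s.length = t.length) : s = t := by
  rcases h with h | h
  · exact h.eq_of_length hl
  · exact (h.eq_of_length hl.symm).symm

theorem pathOf_inj (k : ℕ) (A : Str V α) (l : List α) : Function.Injective
    (fun t : (pathOf k A l).carrier => (⟨t.1.1.length, by have := t.1.2.2; omega⟩ : Fin (k + 1))) := by
  intro s t h
  have h : s.1.1.length = t.1.1.length := by simpa using h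
  exact Subtype.ext (Subtype.ext (cmp_eq (prefix_cmp s.2 t.2) h))

theorem pathOf_finite (k : ℕ) (A : Str V α) (l : List α) : Finite (pathOf k A l).carrier :=
  Finite.of_injective _ (pathOf_inj k A l)

theorem pathOf_coalg (k : ℕ) (A : Str V α) (l : List α) : (pathOf k A l).IsCoalg k := by
  haveI := pathOf_finite k A l
  have hc : ∀ x y : (pathOf k A l).carrier, (pathOf k A l).le x y ∨ (pathOf k A l).le y x :=
    fun x y => prefix_cmp x.2 y.2
  refine ⟨fun x => List.prefix_rfl, fun x y z h h' => List.IsPrefix.trans h h', ?_, ?_,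
    fun x y _ => hc x y⟩
  · intro x y h h'
    exact Subtype.ext (Subtype.ext (h.eq_of_length (le_antisymm h.length_le
      (List.IsPrefix.length_le h'))))
  · intro x
    refine ⟨Set.toFinite _, ?_, fun y z _ _ => hc y z⟩
    calc _ ≤ Nat.card (pathOf k A l).carrier := Set.ncard_le_card _
      _ ≤ Nat.card (Fin (k + 1)) := Nat.card_le_card_of_injective _ (pathOf_inj k A l)
      _ = k + 1 := by simp

theorem pathOf_emb (k : ℕ) (A : Str V α) (l : List α) :
    EObj.IsEmb (pathOf k A l) (FE V k A) (fun t => t.1) := by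
  refine ⟨⟨fun r v h => h, fun x y h => h, ?_, ?_⟩, Subtype.val_injective, fun r v h => h,
    fun x y h => h⟩
  · intro x hx y hy
    exact congrArg Subtype.val (hx ⟨y, List.IsPrefix.trans hy x.2⟩ hy)
  · intro x y h
    refine ⟨h.1, fun e => h.2.1 (Subtype.ext e), fun z hz hz' => ?_⟩
    exact (h.2.2 ⟨z, List.IsPrefix.trans hz' y.2⟩ hz hz').imp (congrArg Subtype.val)
      (congrArg Subtype.val)

theorem piso_of_pwemb {k : ℕ} (A : Str V α) (B : Str V β)
    (f : (FE V k A).carrier → (FE V k B).carrier)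
    (hf : EObj.IsPWEmb k (FE V k A) (FE V k B) f) (l : List α) :
    PIso A B (pset A B f l) := by
  have hfin := pathOf_finite k A l
  have hco := pathOf_coalg k A l
  have hcm : ∀ x y : (pathOf k A l).carrier, (pathOf k A l).le x y ∨ (pathOf k A l).le y x :=
    fun x y => prefix_cmp x.2 y.2
  have he := hf.2 _ hco ⟨hfin, hcm⟩ _ (pathOf_emb k A l)
  have hcf : ∀ x y : (pathOf k A l).carrier, (f x.1).1 <+: (f y.1).1 ∨ (f y.1).1 <+: (f x.1).1 :=
    fun x y => (hcm x y).imp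
      (fun h => hom_mono hco hfin (fun _ => List.prefix_rfl)
        (fun x y z h h' => List.IsPrefix.trans h h') he.1 h)
      (fun h => hom_mono hco hfin (fun _ => List.prefix_rfl)
        (fun x y z h h' => List.IsPrefix.trans h h') he.1 h)
  constructor
  · rintro _ ⟨s, hs, rfl⟩ _ ⟨t, ht, rfl⟩
    constructor
    · intro h
      exact (he.1.2.1 ⟨s, hs⟩ ⟨t, ht⟩ ⟨prefix_cmp hs ht, h⟩).2
    · intro h
      exact (he.2.2.2 ⟨s, hs⟩ ⟨t, ht⟩ ⟨hcf ⟨s, hs⟩ ⟨t, ht⟩, h⟩).2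
  · intro r v hv
    choose w hw hw' using hv
    obtain rfl := funext hw'
    constructor
    · intro h
      exact (he.1.1 r (fun i => ⟨w i, hw i⟩) ⟨fun i j => hcm ⟨w i, hw i⟩ ⟨w j, hw j⟩, h⟩).2
    · intro h
      exact (he.2.2.1 r (fun i => ⟨w i, hw i⟩) ⟨fun i j => hcf ⟨w i, hw i⟩ ⟨w j, hw j⟩, h⟩).2

theorem fe_root {k : ℕ} (A : Str V α) (s : (FE V k A).carrier) :
    (FE V k A).IsRoot s ↔ s.1.length = 1 := by
  obtain ⟨l, hl, hk⟩ := s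
  constructor
  · intro h
    obtain ⟨a, l, rfl⟩ := List.exists_cons_of_ne_nil hl
    have := congrArg Subtype.val (h ⟨[a], by simp, by simp at hk ⊢; omega⟩ ⟨l, rfl⟩)
    simp at this
    simp [← this]
  · rintro h ⟨t, ht, htk⟩ hts
    have hts : t <+: l := hts
    have := List.length_pos_of_ne_nil ht
    have h2 := hts.length_le
    exact Subtype.ext (hts.eq_of_length (by simp at h; omega))

theorem fe_cover {k : ℕ} (A : Str V α) (s t : (FE V k A).carrier) :
    (FE V k A).Cover s t ↔ s.1 <+: t.1 ∧ t.1.length = s.1.length + 1 := by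
  obtain ⟨s, hs, hsk⟩ := s
  obtain ⟨t, ht, htk⟩ := t
  constructor
  · rintro ⟨h, hne, hz⟩
    refine ⟨h, ?_⟩
    obtain ⟨u, rfl⟩ : s <+: t := h
    rcases u with _ | ⟨a, u⟩
    · exact (hne (Subtype.ext (by simp))).elim
    · have := hz ⟨s ++ [a], by simp, by simp at htk ⊢; omega⟩ ⟨[a], rfl⟩ ⟨u, by simp⟩
      rcases this with h | h
      · have := congrArg Subtype.val h
        simp at this
      · have := congrArg (fun x => x.1.length) h
        simp at this
        simp [this]
  · rintro ⟨h, hl⟩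
    simp only at h hl
    refine ⟨h, fun e => ?_, ?_⟩
    · have := congrArg (fun x => x.1.length) e
      simp at this
      omega
    · rintro ⟨z, hz, hzk⟩ h1 h2
      have h1 : s <+: z := h1
      have h2 : z <+: t := h2
      have := h1.length_le
      have := h2.length_le
      rcases (by omega : z.length = s.length ∨ z.length = t.length) with e | e
      · exact Or.inl (Subtype.ext (h1.eq_of_length e.symm).symm)
      · exact Or.inr (Subtype.ext (h2.eq_of_length e))

theorem exists_top {ι : Type} [Finite ι] [Nonempty ι] (v : ι → List α)
    (h : ∀ i j, v i <+: v j ∨ v j <+: v i) : ∃ j, ∀ i, v i <+: v j := by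
  obtain ⟨j, hj⟩ := Finite.exists_max fun i => (v i).length
  refine ⟨j, fun i => (h i j).elim id fun h' => ?_⟩
  rw [h'.eq_of_length (le_antisymm h'.length_le (hj i))]

theorem hom_comp {X Y Z : EObj V} {f : X.carrier → Y.carrier} {g : Y.carrier → Z.carrier}
    (hf : EObj.IsHom X Y f) (hg : EObj.IsHom Y Z g) : EObj.IsHom X Z fun x => g (f x) :=
  ⟨fun r v h => hg.1 r _ (hf.1 r v h), fun x y h => hg.2.1 _ _ (hf.2.1 x y h),
    fun x h => hg.2.2.1 _ (hf.2.2.1 x h), fun x y h => hg.2.2.2 _ _ (hf.2.2.2 x y h)⟩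

theorem pwemb_of_piso (har : ∀ r : V.Rel, V.ar r ≠ 0) {k : ℕ} (A : Str V α) (B : Str V β)
    (f : (FE V k A).carrier → (FE V k B).carrier)
    (h1 : ∀ s, (f s).1.length = s.1.length)
    (h2 : ∀ s t, s.1 <+: t.1 → (f s).1 <+: (f t).1)
    (h3 : ∀ l, l.length ≤ k → PIso A B (pset A B f l)) :
    EObj.IsPWEmb k (FE V k A) (FE V k B) f := by
  have hrel : ∀ r (v : Fin (V.ar r) → (FE V k A).carrier),
      (∀ i j, (v i).1 <+: (v j).1 ∨ (v j).1 <+: (v i).1) →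
      ((A.rel r fun i => (v i).1.getLast (v i).2.1) ↔
        B.rel r fun i => (f (v i)).1.getLast (f (v i)).2.1) := by
    intro r v hv
    haveI : Nonempty (Fin (V.ar r)) := ⟨⟨0, Nat.pos_of_ne_zero (har r)⟩⟩
    obtain ⟨j, hj⟩ := exists_top (fun i => (v i).1) hv
    exact (h3 (v j).1 (v j).2.2).2 r
      (fun i => ((v i).1.getLast (v i).2.1, (f (v i)).1.getLast (f (v i)).2.1))
      (fun i => ⟨v i, hj i, rfl⟩)
  have hieq : ∀ s t : (FE V k A).carrier, (s.1 <+: t.1 ∨ t.1 <+: s.1) →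
      (s.1.getLast s.2.1 = t.1.getLast t.2.1 ↔
        (f s).1.getLast (f s).2.1 = (f t).1.getLast (f t).2.1) := by
    rintro s t (h | h)
    · exact (h3 t.1 t.2.2).1 (_, _) ⟨s, h, rfl⟩ (_, _) ⟨t, List.prefix_rfl, rfl⟩
    · exact (h3 s.1 s.2.2).1 (_, _) ⟨s, List.prefix_rfl, rfl⟩ (_, _) ⟨t, h, rfl⟩
  have hhom : EObj.IsHom (FE V k A) (FE V k B) f := by
    refine ⟨?_, ?_, ?_, ?_⟩
    · rintro r v ⟨hc, h⟩
      exact ⟨fun i j => (hc i j).imp (h2 _ _) (h2 _ _), (hrel r v hc).1 h⟩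
    · rintro s t ⟨hc, h⟩
      exact ⟨hc.imp (h2 _ _) (h2 _ _), (hieq s t hc).1 h⟩
    · intro s hs
      rw [fe_root] at hs ⊢
      rw [h1, hs]
    · intro s t h
      rw [fe_cover] at h ⊢
      exact ⟨h2 _ _ h.1, by rw [h1, h1, h.2]⟩
  refine ⟨hhom, fun P hP hpath m hm => ?_⟩
  have hcm : ∀ x y, (m x).1 <+: (m y).1 ∨ (m y).1 <+: (m x).1 :=
    fun x y => (hpath.2 x y).imp
      (fun h => hom_mono hP hpath.1 (fun _ => List.prefix_rfl)
        (fun x y z h h' => List.IsPrefix.trans h h') hm.1 h)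
      (fun h => hom_mono hP hpath.1 (fun _ => List.prefix_rfl)
        (fun x y z h h' => List.IsPrefix.trans h h') hm.1 h)
  refine ⟨hom_comp hm.1 hhom, ?_, ?_, ?_⟩
  · intro x y h
    have := congrArg (fun x => x.1.length) h
    simp only [h1] at this
    exact hm.2.1 (Subtype.ext (cmp_eq (hcm x y) this))
  · rintro r v ⟨_, h⟩
    exact hm.2.2.1 r v ⟨fun i j => hcm _ _, (hrel r _ fun i j => hcm _ _).2 h⟩
  · rintro x y ⟨_, h⟩
    exact hm.2.2.2 x y ⟨hcm _ _, (hieq _ _ (hcm _ _)).2 h⟩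

theorem exists_pwemb [Finite V.Rel] (har : ∀ r : V.Rel, V.ar r ≠ 0) {k : ℕ}
    (A : Str V α) (B : Str V β)
    (h : ∀ φ : EFml V 0, φ.qr ≤ k → φ.Sat A (fun i => i.elim0) → φ.Sat B (fun i => i.elim0)) :
    ∃ f, EObj.IsPWEmb k (FE V k A) (FE V k B) f := by
  obtain ⟨S, hS, hq, hG⟩ := exists_fmls A B k 0
  obtain ⟨H, H1, H2, H3⟩ := Gm.strategy k _ (hG _ _ fun φ hφ => h φ (hq φ hφ))
  have hlen : ∀ l : List α, l.length ≤ k → (H l).length = l.length := fun l hl => by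
    conv_rhs => rw [← H1 l hl]
    simp
  let f : (FE V k A).carrier → (FE V k B).carrier := fun s =>
    ⟨(H s.1).map Prod.snd, by
      have := List.length_pos_of_ne_nil s.2.1
      rw [← hlen _ s.2.2] at this
      simpa using List.ne_nil_of_length_pos this, by
      rw [List.length_map, hlen _ s.2.2]; exact s.2.2⟩
  refine ⟨f, pwemb_of_piso har A B f ?_ ?_ ?_⟩
  · intro s
    simp [f, hlen _ s.2.2]
  · intro s t hst
    exact (H2 _ _ hst t.2.2).map _
  · intro l hl
    refine (H3 l hl).mono ?_
    rintro _ ⟨t, ht, rfl⟩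
    right
    have hne : H t.1 ≠ [] := by
      have := (f t).2.1
      simpa [f] using this
    refine (H2 _ _ ht hl).subset ?_
    have e1 : t.1.getLast t.2.1 = ((H t.1).getLast hne).1 := by
      have := H1 t.1 t.2.2
      rw [← List.getLast_map (f := Prod.fst) (by simpa using hne)]
      simp only [this]
    have e2 : (f t).1.getLast (f t).2.1 = ((H t.1).getLast hne).2 := by
      simp [f, List.getLast_map]
    rw [e1, e2]
    exact List.getLast_mem hne

end helpers

/-- `A` and `B` satisfy the same sentences of `∃FO_k` if, and only if,
there exist pathwise embeddings `F_k^I(A) → F_k^I(B)` and `F_k^I(B) → F_k^I(A)`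
in `EM(E_k^I)`. -/
theorem existential_EF_equivalence_iff_pathwise_embeddings
    (V : Vocab) [Finite V.Rel] (har : ∀ r : V.Rel, V.ar r ≠ 0)
    {α β : Type} (A : Str V α) (B : Str V β) (k : ℕ) :
    (∀ φ : EFml V 0, φ.qr ≤ k →
        (φ.Sat A (fun i => i.elim0) ↔ φ.Sat B (fun i => i.elim0))) ↔
      ((∃ f, EObj.IsPWEmb k (FE V k A) (FE V k B) f) ∧
        (∃ g, EObj.IsPWEmb k (FE V k B) (FE V k A) g)) := by
  constructor
  · intro h
    exact ⟨exists_pwemb har A B fun φ hφ => (h φ hφ).1,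
      exists_pwemb har B A fun φ hφ => (h φ hφ).2⟩
  · rintro ⟨⟨f, hf⟩, ⟨g, hg⟩⟩ φ hφ
    exact ⟨sat_of_piso A B f (fun l _ => piso_of_pwemb A B f hf l) φ [] _ _ (by simpa using hφ)
        (fun i => i.elim0),
      sat_of_piso B A g (fun l _ => piso_of_pwemb B A g hg l) φ [] _ _ (by simpa using hφ)
        (fun i => i.elim0)⟩
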